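/- arXiv:1608.02406 — 2 statements merged into one kernel-verified Lean document; each statement's English description precedes it below -/
import Mathlib

section
/- In the manipulation construction, for all γ : X → Bool and δ : Y → Bool, if ψ[γ∪δ] is false then the ballot B_{γ,δ} is rational and Dist(B_{γ,δ}, J⃗) = 7n + 3m + 1 + 3u; consequently (using that this is the minimum of Dist(·, J⃗) over rational ballots) B_{γ,δ} ∈ Kemeny(J⃗). -/
/-!
The cumulative distance splits over the issues. On an `x`-, primed `x`-, `w`- or `u`-issue exactly one
of the three voters accepts, so the value false costs 1 and true costs 2; on a `z`-, `y`-, primed `y`- or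
`t`-issue all voters reject, so the value false costs 0 and true costs 3. Hence (`distP_eq`) the
all-false ballot has distance `5n + 1 + 3u`, and every true issue adds 1 or 3 to it.

A rational ballot has to pay at least `2n + 3m` on top of that (`le_distP`):
* if a whole block of `u`-issues is true, it pays `u = 10n + 10m + 10`;
* otherwise `Γ₀` forces `n` from the `x`-part (`n` true issues under `A`, or `3 · (n/3)` from
  `Z`, equal to `n` because `3 ∣ n`), `3m` from the `y`-part (under `B` or `T`), and at least `n`
  from one of the `w`-blocks.
The ballot `B_{γ,δ}` pays exactly this amount, and it satisfies `Γ₀` when `ψ[γ∪δ]` is false.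
-/

/-!
Constraint-based judgment aggregation: the manipulation construction.
Issues are modelled as an inductive type, ballots as functions `Issue n m → Bool`,
the integrity constraint as a predicate on ballots, and the formula ψ as a Boolean
function of the assignments to X and Y.
-/

namespace Manip

/-- The issues of the manipulation construction. -/
inductive Issue (n m : ℕ) : Type
  | x : Fin n → Issue n m
  | x' : Fin n → Issue n m
  | z : Fin (n / 3) → Issue n m
  | y : Fin m → Issue n m
  | y' : Fin m → Issue n m
  | t : Fin m → Issue n m
  | w1 : Fin (n + 1) → Issue n m
  | w2 : Fin n → Issue n m
  | w3 : Fin n → Issue n m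
  | u : Fin 3 → Fin (10 * n + 10 * m + 10) → Issue n m
  deriving DecidableEq, Fintype

variable {n m : ℕ}

/-- Hamming distance between two ballots: the number of issues on which they differ. -/
def hamming {I : Type*} [Fintype I] (r r' : I → Bool) : ℕ :=
  (Finset.univ.filter (fun i => r i ≠ r' i)).card

def bigA (r : Issue n m → Bool) : Prop := ∀ i, r (.x i) ≠ r (.x' i)
def bigZ (r : Issue n m → Bool) : Prop := ∀ i, r (.z i) = true
def bigB (r : Issue n m → Bool) : Prop := ∀ j, r (.y j) ≠ r (.y' j)
def bigT (r : Issue n m → Bool) : Prop := ∀ j, r (.t j) = true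
def bigW1 (r : Issue n m → Bool) : Prop := ∀ ℓ, r (.w1 ℓ) = true
def bigW2 (r : Issue n m → Bool) : Prop := ∀ ℓ, r (.w2 ℓ) = true
def bigW3 (r : Issue n m → Bool) : Prop := ∀ ℓ, r (.w3 ℓ) = true

/-- The part Γ₀ of the integrity constraint. -/
def gamma0 (psi : (Fin n → Bool) → (Fin m → Bool) → Bool) (r : Issue n m → Bool) : Prop :=
  (bigA r ∨ bigZ r) ∧ (bigA r → ∀ i, r (.z i) = false) ∧
  Xor' (bigB r) (bigT r) ∧ (bigB r → ∀ j, r (.t j) = false) ∧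
  (bigZ r → ∀ i, r (.x i) = false ∧ r (.x' i) = false) ∧
  (bigT r → ∀ j, r (.y j) = false ∧ r (.y' j) = false) ∧
  (bigZ r → bigT r) ∧
  ((bigZ r ∧ bigT r) → (bigW2 r ∨ bigW3 r)) ∧
  ((¬ bigZ r ∧ bigT r) → bigW1 r) ∧
  ((¬ bigZ r ∧ ¬ bigT r) →
    (psi (fun i => r (.x i)) (fun j => r (.y j)) = false ∧ (bigW2 r ∨ bigW3 r)))

/-- A ballot is rational if it satisfies the integrity constraint
`Γ = Γ₀ ∨ ⋁_{i∈[3]} ⋀_{ℓ∈[u]} u_{i,ℓ}`. -/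
def rational (psi : (Fin n → Bool) → (Fin m → Bool) → Bool) (r : Issue n m → Bool) : Prop :=
  gamma0 psi r ∨ ∃ i : Fin 3, ∀ ℓ, r (.u i ℓ) = true

/-- The first individual ballot J₁: true exactly on the w₁- and u₁-issues. -/
def Jone : Issue n m → Bool := fun i => match i with
  | .w1 _ => true
  | .u k _ => k == 0
  | _ => false

/-- The second individual ballot J₂: true exactly on the w₂- and u₂-issues. -/
def Jtwo : Issue n m → Bool := fun i => match i with
  | .w2 _ => true
  | .u k _ => k == 1
  | _ => false

/-- The third individual ballot J₃: true exactly on the x-, x'-, w₃- and u₃-issues. -/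
def Jthree : Issue n m → Bool := fun i => match i with
  | .x _ => true
  | .x' _ => true
  | .w3 _ => true
  | .u k _ => k == 2
  | _ => false

/-- Cumulative Hamming distance of a ballot to a profile of three ballots. -/
def dist3 (r p1 p2 p3 : Issue n m → Bool) : ℕ :=
  hamming r p1 + hamming r p2 + hamming r p3

/-- Cumulative Hamming distance to the profile J⃗ = (J₁, J₂, J₃). -/
def DistP (r : Issue n m → Bool) : ℕ := dist3 r Jone Jtwo Jthree

/-- Membership in the set of Kemeny outcomes of the profile (p1, p2, p3):
a rational ballot minimizing the cumulative Hamming distance among rational ballots. -/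
def kemenyMem (psi : (Fin n → Bool) → (Fin m → Bool) → Bool)
    (p1 p2 p3 r : Issue n m → Bool) : Prop :=
  rational psi r ∧ ∀ r', rational psi r' → dist3 r p1 p2 p3 ≤ dist3 r' p1 p2 p3


/-- The ballot B_{γ,δ}: x_i ↦ γ(x_i), x'_i ↦ ¬γ(x_i), y_j ↦ δ(y_j), y'_j ↦ ¬δ(y_j),
all w₂-issues true, every other issue false. -/
def Bgd (γ : Fin n → Bool) (δ : Fin m → Bool) : Issue n m → Bool := fun i => match i with
  | .x i' => γ i'
  | .x' i' => !(γ i')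
  | .y j => δ j
  | .y' j => !(δ j)
  | .w2 _ => true
  | _ => false

end Manip

namespace Manip

/-- The issues as a disjoint union of index types. -/
def issueEquiv (n m : ℕ) : Issue n m ≃
    Fin n ⊕ Fin n ⊕ Fin (n / 3) ⊕ Fin m ⊕ Fin m ⊕ Fin m ⊕ Fin (n + 1) ⊕ Fin n ⊕ Fin n ⊕
      (Fin 3 × Fin (10 * n + 10 * m + 10)) where
  toFun
    | .x i => .inl i
    | .x' i => .inr (.inl i)
    | .z i => .inr (.inr (.inl i))
    | .y i => .inr (.inr (.inr (.inl i)))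
    | .y' i => .inr (.inr (.inr (.inr (.inl i))))
    | .t i => .inr (.inr (.inr (.inr (.inr (.inl i)))))
    | .w1 i => .inr (.inr (.inr (.inr (.inr (.inr (.inl i))))))
    | .w2 i => .inr (.inr (.inr (.inr (.inr (.inr (.inr (.inl i)))))))
    | .w3 i => .inr (.inr (.inr (.inr (.inr (.inr (.inr (.inr (.inl i))))))))
    | .u k l => .inr (.inr (.inr (.inr (.inr (.inr (.inr (.inr (.inr (k, l)))))))))
  invFun
    | .inl i => .x i
    | .inr (.inl i) => .x' i
    | .inr (.inr (.inl i)) => .z i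
    | .inr (.inr (.inr (.inl i))) => .y i
    | .inr (.inr (.inr (.inr (.inl i)))) => .y' i
    | .inr (.inr (.inr (.inr (.inr (.inl i))))) => .t i
    | .inr (.inr (.inr (.inr (.inr (.inr (.inl i)))))) => .w1 i
    | .inr (.inr (.inr (.inr (.inr (.inr (.inr (.inl i))))))) => .w2 i
    | .inr (.inr (.inr (.inr (.inr (.inr (.inr (.inr (.inl i)))))))) => .w3 i
    | .inr (.inr (.inr (.inr (.inr (.inr (.inr (.inr (.inr (k, l))))))))) => .u k l
  left_inv i := by cases i <;> rfl
  right_inv i := by rcases i with i | i | i | i | i | i | i | i | i | ⟨k, l⟩ <;> rfl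

lemma sum_issue {n m : ℕ} (f : Issue n m → ℕ) :
    ∑ i, f i = ∑ i, f (.x i) + ∑ i, f (.x' i) + ∑ i, f (.z i) + ∑ j, f (.y j) + ∑ j, f (.y' j)
      + ∑ j, f (.t j) + ∑ l, f (.w1 l) + ∑ l, f (.w2 l) + ∑ l, f (.w3 l)
      + ∑ k, ∑ l, f (.u k l) := by
  rw [← (issueEquiv n m).symm.sum_comp f]
  simp only [Fintype.sum_sum_type, Fintype.sum_prod_type, issueEquiv, Equiv.coe_fn_symm_mk]
  ring

lemma distP_eq_sum {n m : ℕ} (r : Issue n m → Bool) :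
    DistP r = ∑ i, ((r i ^^ Jone i).toNat + (r i ^^ Jtwo i).toNat + (r i ^^ Jthree i).toNat) := by
  have h (p : Issue n m → Bool) : hamming r p = ∑ i, (r i ^^ p i).toNat := by
    rw [hamming, Finset.card_filter]
    refine Finset.sum_congr rfl fun i _ => ?_
    cases r i <;> cases p i <;> rfl
  simp only [DistP, dist3, h, Finset.sum_add_distrib]

/-- The distance of a ballot in terms of the numbers of true issues in each block. -/
lemma distP_eq {n m : ℕ} (r : Issue n m → Bool) :
    DistP r = 5 * n + 1 + 3 * (10 * n + 10 * m + 10)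
      + (∑ i, ((r (.x i)).toNat + (r (.x' i)).toNat) + 3 * ∑ i, (r (.z i)).toNat)
      + 3 * (∑ j, ((r (.y j)).toNat + (r (.y' j)).toNat) + ∑ j, (r (.t j)).toNat)
      + (∑ l, (r (.w1 l)).toNat + ∑ l, (r (.w2 l)).toNat + ∑ l, (r (.w3 l)).toNat)
      + ∑ k, ∑ l, (r (.u k l)).toNat := by
  have e1 (b : Bool) : (b ^^ true).toNat + b.toNat + b.toNat = 1 + b.toNat := by cases b <;> rfl
  have e2 (b : Bool) : b.toNat + (b ^^ true).toNat + b.toNat = 1 + b.toNat := by cases b <;> rfl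
  have e3 (b : Bool) : b.toNat + b.toNat + (b ^^ true).toNat = 1 + b.toNat := by cases b <;> rfl
  have e0 (b : Bool) : b.toNat + b.toNat + b.toNat = 3 * b.toNat := by cases b <;> rfl
  have eu (k : Fin 3) (b : Bool) :
      (b ^^ (k == 0)).toNat + (b ^^ (k == 1)).toNat + (b ^^ (k == 2)).toNat = 1 + b.toNat := by
    revert k b; decide
  rw [distP_eq_sum, sum_issue]
  simp only [Jone, Jtwo, Jthree, Bool.xor_false, e0, e1, e2, e3, eu, Finset.sum_add_distrib,
    ← Finset.mul_sum, Finset.sum_const, Finset.card_univ, Fintype.card_fin, smul_eq_mul]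
  ring

lemma sum_toNat_of_forall {k : ℕ} {f : Fin k → Bool} (h : ∀ i, f i = true) :
    ∑ i, (f i).toNat = k := by
  simp [h]

lemma sum_toNat_of_ne {k : ℕ} {f g : Fin k → Bool} (h : ∀ i, f i ≠ g i) :
    ∑ i, ((f i).toNat + (g i).toNat) = k := by
  have h1 (i : Fin k) : (f i).toNat + (g i).toNat = 1 := by
    have := h i
    revert this
    cases f i <;> cases g i <;> simp
  simp [h1]

/-- Every rational ballot is at distance at least `7n + 3m + 1 + 3u` from the profile. -/
lemma le_distP {n m : ℕ} (hdvd : 3 ∣ n)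
    (psi : (Fin n → Bool) → (Fin m → Bool) → Bool) (r : Issue n m → Bool)
    (hr : rational psi r) :
    7 * n + 3 * m + 1 + 3 * (10 * n + 10 * m + 10) ≤ DistP r := by
  rw [distP_eq]
  rcases hr with ⟨hAZ, -, hBT, -, -, -, hZT, hZTw, hTw, hw⟩ | ⟨k, hk⟩
  · have hx : n ≤ ∑ i, ((r (.x i)).toNat + (r (.x' i)).toNat) + 3 * ∑ i, (r (.z i)).toNat := by
      rcases hAZ with hA | hZ
      · have := sum_toNat_of_ne hA
        omega
      · have := sum_toNat_of_forall hZ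
        omega
    have hy : m ≤ ∑ j, ((r (.y j)).toNat + (r (.y' j)).toNat) + ∑ j, (r (.t j)).toNat := by
      rcases Xor.or hBT with hB | hT
      · have := sum_toNat_of_ne hB
        omega
      · have := sum_toNat_of_forall hT
        omega
    have hw' : n ≤ ∑ l, (r (.w1 l)).toNat + ∑ l, (r (.w2 l)).toNat + ∑ l, (r (.w3 l)).toNat := by
      have h : bigW1 r ∨ bigW2 r ∨ bigW3 r := by tauto
      rcases h with h | h | h
      all_goals
        have := sum_toNat_of_forall h
        omega
    omega
  · have h1 : ∑ l, (r (.u k l)).toNat ≤ ∑ k, ∑ l, (r (.u k l)).toNat :=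
      Finset.single_le_sum (f := fun k => ∑ l, (r (.u k l)).toNat)
        (fun _ _ => Nat.zero_le _) (Finset.mem_univ k)
    rw [sum_toNat_of_forall hk] at h1
    omega

lemma distP_Bgd {n m : ℕ} (γ : Fin n → Bool) (δ : Fin m → Bool) :
    DistP (Bgd γ δ : Issue n m → Bool) = 7 * n + 3 * m + 1 + 3 * (10 * n + 10 * m + 10) := by
  have hx := sum_toNat_of_ne (f := γ) (g := fun i => !γ i) (by simp)
  have hy := sum_toNat_of_ne (f := δ) (g := fun j => !δ j) (by simp)
  rw [distP_eq]
  simp only [Bgd, hx, hy]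
  simp
  ring

/-- `B_{γ,δ}` satisfies `Γ₀`. Positivity of `n / 3` and `m` makes `Z` and `T` fail rather than
hold vacuously. -/
lemma rational_Bgd {n m : ℕ} (hn : 0 < n) (hdvd : 3 ∣ n) (hm : 0 < m)
    (psi : (Fin n → Bool) → (Fin m → Bool) → Bool)
    (γ : Fin n → Bool) (δ : Fin m → Bool) (hfalse : psi γ δ = false) :
    rational psi (Bgd γ δ : Issue n m → Bool) := by
  have hA : bigA (Bgd γ δ : Issue n m → Bool) := fun i => by simp [Bgd]
  have hB : bigB (Bgd γ δ : Issue n m → Bool) := fun i => by simp [Bgd]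
  have hZ : ¬ bigZ (Bgd γ δ : Issue n m → Bool) := fun h => by
    simpa [Bgd] using h ⟨0, by omega⟩
  have hT : ¬ bigT (Bgd γ δ : Issue n m → Bool) := fun h => by
    simpa [Bgd] using h ⟨0, hm⟩
  have hW : bigW2 (Bgd γ δ : Issue n m → Bool) := fun _ => rfl
  exact .inl ⟨.inl hA, fun _ _ => rfl, .inl ⟨hB, hT⟩, fun _ _ => rfl, fun h => absurd h hZ,
    fun h => absurd h hT, fun h => absurd h hZ, fun h => absurd h.1 hZ, fun h => absurd h.2 hT,
    fun _ => ⟨hfalse, .inl hW⟩⟩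

end Manip

open Manip in
/-- for all γ, δ, if ψ[γ∪δ] is false then B_{γ,δ} is rational,
Dist(B_{γ,δ}, J⃗) = 7n + 3m + 1 + 3u, and consequently B_{γ,δ} ∈ Kemeny(J⃗). -/
theorem manip_counterexample_ballot (n m : ℕ) (hn : 0 < n) (hdvd : 3 ∣ n) (hm : 0 < m)
    (psi : (Fin n → Bool) → (Fin m → Bool) → Bool)
    (γ : Fin n → Bool) (δ : Fin m → Bool)
    (hfalse : psi γ δ = false) :
    rational psi (Bgd γ δ : Issue n m → Bool) ∧
    DistP (Bgd γ δ : Issue n m → Bool) = 7 * n + 3 * m + 1 + 3 * (10 * n + 10 * m + 10) ∧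
    kemenyMem psi Jone Jtwo Jthree (Bgd γ δ : Issue n m → Bool) := by
  have hr := rational_Bgd hn hdvd hm psi γ δ hfalse
  refine ⟨hr, distP_Bgd γ δ, hr, fun r' hr' => ?_⟩
  exact (distP_Bgd γ δ).trans_le (le_distP hdvd psi r' hr')
end

section
/- In the bribery construction, assume m < n. If α : X → Bool is such that ψ[α∪β] is true for every β : Y → Bool, then Kemeny((J*_α, J₂, J₃)) = {J*_α}; moreover d(J*_α, J₀, w) = 0, which is strictly smaller than the weighted distance 2m+4 of every Kemeny outcome of the original profile J⃗ to J₀. -/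
/-!
Write the cumulative distance to a profile as a sum over issues of the number of disagreeing
ballots (`dist3_bribed`, `dist3_orig`). Measure costs relative to the majority values of all
issues, which are all false in both profiles. With `Z`, `A`, `B`, `T`, `C` as in `Γ₀`, a ballot
satisfying `Γ₀` accepts `Z`, `T`, `a`, or `A`, `B`, `a` with `ψ` false, or `A`, `T`, `C`
(`gamma0_cases`).

In the bribed profile, accepting an issue costs 1 extra if one ballot accepts it and 3 if none
does. Hence `J*_α` has extra cost `n + 3m + 4`, and every other ballot of the third kind costs more.
The first kind costs at least `3n + m + 3`, which is larger because `m < n`. In the second kind,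
the `x`-part cannot agree with `α`, as `ψ[α∪β]` is always true; one disagreement raises the cost to
at least `n + 3m + 5`. A fully accepted row of `u`-issues costs at least `10n + 10m + 10`. So
`J*_α` is the unique minimizer (`eq_Jalpha_of_dist3_le`).

In the original profile, the ballot `Jzt` of the first kind has extra cost `3n + 3m + 3`, beating
all ballots of the third kind and all fully accepted rows. Kemeny outcomes are therefore of the
first or second kind, accept `a`, and reject all `b`-issues (`kemenyMem_orig_b`).
-/

/-!
Constraint-based judgment aggregation: the bribery construction.
Issues are modelled as an inductive type, ballots as functions `Issue n m → Bool`,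
the integrity constraint as a predicate on ballots, and the formula ψ as a Boolean
function of the assignments to X and Y.
-/

namespace Brib

/-- The issues of the bribery construction. -/
inductive Issue (n m : ℕ) : Type
  | x : Fin n → Issue n m
  | x' : Fin n → Issue n m
  | z : Fin n → Issue n m
  | y : Fin m → Issue n m
  | y' : Fin m → Issue n m
  | t : Fin m → Issue n m
  | u : Fin 3 → Fin (10 * n + 10 * m + 10) → Issue n m
  | a : Issue n m
  | b : Fin (2 * m + 4) → Issue n m
  deriving DecidableEq, Fintype

variable {n m : ℕ}

/-- Hamming distance between two ballots: the number of issues on which they differ. -/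
def hamming {I : Type*} [Fintype I] (r r' : I → Bool) : ℕ :=
  (Finset.univ.filter (fun i => r i ≠ r' i)).card

/-- Weighted Hamming distance: the sum of the weights of the issues on which the
two ballots differ. -/
def whamming {I : Type*} [Fintype I] (w : I → ℕ) (r r' : I → Bool) : ℕ :=
  ∑ i ∈ Finset.univ.filter (fun i => r i ≠ r' i), w i

def bigA (r : Issue n m → Bool) : Prop := ∀ i, r (.x i) ≠ r (.x' i)
def bigZ (r : Issue n m → Bool) : Prop := ∀ i, r (.z i) = true
def bigB (r : Issue n m → Bool) : Prop := ∀ j, r (.y j) ≠ r (.y' j)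
def bigT (r : Issue n m → Bool) : Prop := ∀ j, r (.t j) = true
def bigC (r : Issue n m → Bool) : Prop := ∀ j, r (.b j) = true

/-- The part Γ₀ of the integrity constraint. -/
def gamma0 (psi : (Fin n → Bool) → (Fin m → Bool) → Bool) (r : Issue n m → Bool) : Prop :=
  (r .a = true ∨ bigC r) ∧ (r .a = true → ∀ j, r (.b j) = false) ∧
  (bigC r → r .a = false) ∧
  (bigA r ∨ bigZ r) ∧ (bigA r → ∀ i, r (.z i) = false) ∧
  Xor' (bigB r) (bigT r) ∧ (bigB r → ∀ j, r (.t j) = false) ∧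
  (bigZ r → ∀ i, r (.x i) = false ∧ r (.x' i) = false) ∧
  (bigT r → ∀ j, r (.y j) = false ∧ r (.y' j) = false) ∧
  (bigZ r → (r .a = true ∧ bigT r)) ∧
  ((bigA r ∧ bigB r) →
    (psi (fun i => r (.x i)) (fun j => r (.y j)) = false ∧ r .a = true)) ∧
  ((bigA r ∧ bigT r) → bigC r)

/-- A ballot is rational if it satisfies the integrity constraint
`Γ = Γ₀ ∨ ⋁_{i∈[3]} ⋀_{ℓ∈[u]} u_{i,ℓ}`. -/
def rational (psi : (Fin n → Bool) → (Fin m → Bool) → Bool) (r : Issue n m → Bool) : Prop :=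
  gamma0 psi r ∨ ∃ i : Fin 3, ∀ ℓ, r (.u i ℓ) = true

/-- The profile J⃗ = (J₁, J₂, J₃): the ballot J_{k+1} sets exactly the issues
u_{k+1,ℓ} to true. -/
def Jp (k : Fin 3) : Issue n m → Bool := fun i => match i with
  | .u k' _ => k' == k
  | _ => false

/-- The briber's desired ballot J₀: true exactly on the b- and u₁-issues. -/
def Jzero : Issue n m → Bool := fun i => match i with
  | .b _ => true
  | .u k _ => k == 0
  | _ => false

/-- The briber's weight function: weight 1 on each b-issue, weight 0 elsewhere. -/
def wt : Issue n m → ℕ := fun i => match i with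
  | .b _ => 1
  | _ => 0

/-- Cumulative Hamming distance of a ballot to a profile of three ballots. -/
def dist3 (r p1 p2 p3 : Issue n m → Bool) : ℕ :=
  hamming r p1 + hamming r p2 + hamming r p3

/-- Membership in the set of Kemeny outcomes of the profile (p1, p2, p3):
a rational ballot minimizing the cumulative Hamming distance among rational ballots. -/
def kemenyMem (psi : (Fin n → Bool) → (Fin m → Bool) → Bool)
    (p1 p2 p3 r : Issue n m → Bool) : Prop :=
  rational psi r ∧ ∀ r', rational psi r' → dist3 r p1 p2 p3 ≤ dist3 r' p1 p2 p3

/-- The ballot J*_α: x_i ↦ α(x_i), x'_i ↦ ¬α(x_i), all t- and b-issues true,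
every other issue false. -/
def Jalpha (α : Fin n → Bool) : Issue n m → Bool := fun i => match i with
  | .x i' => α i'
  | .x' i' => !(α i')
  | .t _ => true
  | .b _ => true
  | _ => false

end Brib

namespace Brib

variable {n m : ℕ}

/-! ### Distances as sums over issues -/

/-- The issues, as the disjoint union of the nine families. -/
def issueEquiv (n m : ℕ) : Issue n m ≃
    (Fin n ⊕ Fin n ⊕ Fin n) ⊕ (Fin m ⊕ Fin m ⊕ Fin m) ⊕
      (Fin 3 × Fin (10 * n + 10 * m + 10)) ⊕ Unit ⊕ Fin (2 * m + 4) where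
  toFun
    | .x i => .inl (.inl i)
    | .x' i => .inl (.inr (.inl i))
    | .z i => .inl (.inr (.inr i))
    | .y j => .inr (.inl (.inl j))
    | .y' j => .inr (.inl (.inr (.inl j)))
    | .t j => .inr (.inl (.inr (.inr j)))
    | .u k l => .inr (.inr (.inl (k, l)))
    | .a => .inr (.inr (.inr (.inl ())))
    | .b j => .inr (.inr (.inr (.inr j)))
  invFun
    | .inl (.inl i) => .x i
    | .inl (.inr (.inl i)) => .x' i
    | .inl (.inr (.inr i)) => .z i
    | .inr (.inl (.inl j)) => .y j
    | .inr (.inl (.inr (.inl j))) => .y' j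
    | .inr (.inl (.inr (.inr j))) => .t j
    | .inr (.inr (.inl (k, l))) => .u k l
    | .inr (.inr (.inr (.inl ()))) => .a
    | .inr (.inr (.inr (.inr j))) => .b j
  left_inv i := by cases i <;> rfl
  right_inv i := by rcases i with (_ | _ | _) | (_ | _ | _) | ⟨_, _⟩ | _ | _ <;> rfl

theorem sum_issue (f : Issue n m → ℕ) :
    ∑ i, f i = ∑ i, (f (.x i) + f (.x' i)) + ∑ i, f (.z i) + ∑ j, (f (.y j) + f (.y' j))
      + ∑ j, f (.t j) + ∑ l, (f (.u 0 l) + f (.u 1 l) + f (.u 2 l)) + f .a + ∑ j, f (.b j) := by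
  rw [← Equiv.sum_comp (issueEquiv n m).symm f]
  simp only [Fintype.sum_sum_type, Fintype.sum_prod_type, Fin.sum_univ_three,
    Finset.sum_add_distrib, Fintype.sum_unique]
  simp only [issueEquiv, Equiv.coe_fn_symm_mk]
  ring

/-- The cumulative distance as a sum over issues of the number of disagreeing ballots. -/
theorem dist3_eq_sum (r p1 p2 p3 : Issue n m → Bool) :
    dist3 r p1 p2 p3 = ∑ i, ((r i ^^ p1 i).toNat + (r i ^^ p2 i).toNat + (r i ^^ p3 i).toNat) := by
  have h : ∀ p : Issue n m → Bool, hamming r p = ∑ i, (r i ^^ p i).toNat := by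
    intro p
    rw [hamming, Finset.card_filter]
    refine Finset.sum_congr rfl fun i _ => ?_
    cases r i <;> cases p i <;> rfl
  simp only [dist3, h, Finset.sum_add_distrib]

/-- The weighted distance to `J₀` counts the `b`-issues set to false. -/
theorem whamming_Jzero (r : Issue n m → Bool) :
    whamming wt r Jzero = ∑ j, (!r (.b j)).toNat := by
  have hb : ∀ j, (if r (.b j) ≠ Jzero (.b j : Issue n m) then wt (.b j : Issue n m) else 0)
      = (!r (.b j)).toNat := fun j => by
    simp only [Jzero, wt]
    cases r (.b j) <;> rfl
  rw [whamming, Finset.sum_filter, sum_issue, Finset.sum_congr rfl fun j _ => hb j]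
  simp [wt]

/-- The cumulative distance to the original profile: a `u`-issue costs 1 or 2, every other
issue costs 0 or 3, the larger value being that of acceptance. -/
theorem dist3_orig (r : Issue n m → Bool) :
    dist3 r (Jp 0) (Jp 1) (Jp 2) =
      ∑ i, (3 * (r (.x i)).toNat + 3 * (r (.x' i)).toNat) + ∑ i, 3 * (r (.z i)).toNat
      + ∑ j, (3 * (r (.y j)).toNat + 3 * (r (.y' j)).toNat) + ∑ j, 3 * (r (.t j)).toNat
      + ∑ l, (3 + (r (.u 0 l)).toNat + (r (.u 1 l)).toNat + (r (.u 2 l)).toNat)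
      + 3 * (r .a).toNat + ∑ j, 3 * (r (.b j)).toNat := by
  have h3 : ∀ b : Bool, (b ^^ false).toNat + (b ^^ false).toNat + (b ^^ false).toNat
      = 3 * b.toNat := by decide
  rw [dist3_eq_sum, sum_issue]
  simp only [Jp, h3]
  congr! 4 with l
  cases r (.u 0 l) <;> cases r (.u 1 l) <;> cases r (.u 2 l) <;> decide

/-- The cost of the values `v`, `v'` of the issues `x_i`, `x'_i` in the bribed profile, where
`c` is the value of `α` at `x_i`. -/
def pairCost (c v v' : Bool) : ℕ :=
  cond c (1 + v.toNat + 3 * v'.toNat) (3 * v.toNat + (1 + v'.toNat))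

/-- The cumulative distance to the bribed profile. -/
theorem dist3_bribed (α : Fin n → Bool) (r : Issue n m → Bool) :
    dist3 r (Jalpha α) (Jp 1) (Jp 2) =
      ∑ i, pairCost (α i) (r (.x i)) (r (.x' i)) + ∑ i, 3 * (r (.z i)).toNat
      + ∑ j, (3 * (r (.y j)).toNat + 3 * (r (.y' j)).toNat) + ∑ j, (1 + (r (.t j)).toNat)
      + ∑ l, (2 + 3 * (r (.u 0 l)).toNat + (r (.u 1 l)).toNat + (r (.u 2 l)).toNat)
      + 3 * (r .a).toNat + ∑ j, (1 + (r (.b j)).toNat) := by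
  have h3 : ∀ b : Bool, (b ^^ false).toNat + (b ^^ false).toNat + (b ^^ false).toNat
      = 3 * b.toNat := by decide
  have h1 : ∀ b : Bool, (b ^^ true).toNat + (b ^^ false).toNat + (b ^^ false).toNat
      = 1 + b.toNat := by decide
  rw [dist3_eq_sum, sum_issue]
  simp only [Jp, Jalpha, h3, h1]
  congr! 4 with l
  · congr! 4 with i
    cases α i <;> cases r (.x i) <;> cases r (.x' i) <;> decide
  · cases r (.u 0 l) <;> cases r (.u 1 l) <;> cases r (.u 2 l) <;> decide

/-! ### Bounds for sums -/

theorem le_sum_fin {k c : ℕ} {f : Fin k → ℕ} (h : ∀ i, c ≤ f i) : k * c ≤ ∑ i, f i := by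
  simpa using Finset.card_nsmul_le_sum Finset.univ f c fun i _ => h i

theorem sum_fin_eq {k c : ℕ} {f : Fin k → ℕ} (h : ∀ i, f i = c) : ∑ i, f i = k * c := by
  simp [h]

theorem eq_of_sum_fin_le {k c : ℕ} {f : Fin k → ℕ} (h : ∀ i, c ≤ f i)
    (hs : ∑ i, f i ≤ k * c) (i : Fin k) : f i = c := by
  have he : ∑ _i : Fin k, c = ∑ i, f i :=
    le_antisymm (Finset.sum_le_sum fun i _ => h i) (by simpa using hs)
  exact ((Finset.sum_eq_sum_iff_of_le fun i _ => h i).1 he i (Finset.mem_univ i)).symm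

/-- A sum of terms at least `c`, one of which is at least `c + 2`. -/
theorem le_sum_fin_of_exists {k c : ℕ} {f : Fin k → ℕ} (h : ∀ i, c ≤ f i)
    (i₀ : Fin k) (h₀ : c + 2 ≤ f i₀) : k * c + 2 ≤ ∑ i, f i := by
  have h1 := Finset.sum_le_sum (s := Finset.univ) (f := fun i => c + if i = i₀ then 2 else 0)
    (g := f) (fun i _ => by split_ifs with hi <;> [exact hi ▸ h₀; exact h i])
  simpa [Finset.sum_add_distrib] using h1

/-! ### The bribed profile -/

/-- The three kinds of ballots satisfying `Γ₀`. -/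
theorem gamma0_cases {psi : (Fin n → Bool) → (Fin m → Bool) → Bool}
    {r : Issue n m → Bool} (h : gamma0 psi r) :
    (bigZ r ∧ bigT r ∧ r .a = true ∧ ∀ j, r (.b j) = false) ∨
    (bigA r ∧ bigB r ∧ psi (fun i => r (.x i)) (fun j => r (.y j)) = false ∧ r .a = true ∧
      ∀ j, r (.b j) = false) ∨
    (bigA r ∧ (∀ i, r (.z i) = false) ∧ bigT r ∧ (∀ j, r (.y j) = false ∧ r (.y' j) = false) ∧
      r .a = false ∧ bigC r) := by
  obtain ⟨-, hab, hca, hAZ, hAz, hBT, -, -, hTy, hZ, hAB, hAT⟩ := h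
  rcases hAZ with hA | hZ'
  · rcases hBT with ⟨hB, -⟩ | ⟨hT, -⟩
    · obtain ⟨hp, ha⟩ := hAB ⟨hA, hB⟩
      exact .inr (.inl ⟨hA, hB, hp, ha, hab ha⟩)
    · have hC := hAT ⟨hA, hT⟩
      exact .inr (.inr ⟨hA, hAz hA, hT, hTy hT, hca hC, hC⟩)
  · obtain ⟨ha, hT⟩ := hZ hZ'
    exact .inl ⟨hZ', hT, ha, hab ha⟩

theorem two_le_pairCost {c v v' : Bool} (h : v ≠ v') : 2 ≤ pairCost c v v' := by
  revert c v v'; decide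

theorem one_le_pairCost (c v v' : Bool) : 1 ≤ pairCost c v v' := by
  revert c v v'; decide

theorem rational_Jalpha (hn : 0 < n) (hm : 0 < m)
    (psi : (Fin n → Bool) → (Fin m → Bool) → Bool) (α : Fin n → Bool) :
    rational psi (Jalpha α : Issue n m → Bool) := by
  left
  have hA : bigA (Jalpha α : Issue n m → Bool) := fun i => by simp [Jalpha]
  have hZ : ¬ bigZ (Jalpha α : Issue n m → Bool) := fun h => by simpa [Jalpha] using h ⟨0, hn⟩
  have hB : ¬ bigB (Jalpha α : Issue n m → Bool) := fun h => by simpa [Jalpha] using h ⟨0, hm⟩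
  have hT : bigT (Jalpha α : Issue n m → Bool) := fun j => rfl
  have hC : bigC (Jalpha α : Issue n m → Bool) := fun j => rfl
  simp only [gamma0, hA, hZ, hB, hT, hC]
  simp [Jalpha, Xor']

theorem dist3_Jalpha (α : Fin n → Bool) :
    dist3 (Jalpha α : Issue n m → Bool) (Jalpha α) (Jp 1) (Jp 2)
      = n * 2 + m * 2 + (10 * n + 10 * m + 10) * 2 + (2 * m + 4) * 2 := by
  rw [dist3_bribed, sum_fin_eq (c := 2) (f := fun i => pairCost _ _ _)]
  · simp [Jalpha]
  · intro i
    simp only [Jalpha]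
    cases α i <;> rfl

/-- In the bribed profile, any rational ballot at least as good as `J*_α` is `J*_α`. -/
theorem eq_Jalpha_of_dist3_le (hmn : m < n)
    {psi : (Fin n → Bool) → (Fin m → Bool) → Bool} {α : Fin n → Bool}
    (hα : ∀ β : Fin m → Bool, psi α β = true) {r : Issue n m → Bool} (hr : rational psi r)
    (hd : dist3 r (Jalpha α) (Jp 1) (Jp 2)
      ≤ dist3 (Jalpha α : Issue n m → Bool) (Jalpha α) (Jp 1) (Jp 2)) : r = Jalpha α := by
  rw [dist3_Jalpha, dist3_bribed] at hd
  have hx1 := le_sum_fin fun i => one_le_pairCost (α i) (r (.x i)) (r (.x' i))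
  have ht1 := le_sum_fin (c := 1) (f := fun j => 1 + (r (.t j)).toNat) fun j => by omega
  have hb1 := le_sum_fin (c := 1) (f := fun j => 1 + (r (.b j)).toNat) fun j => by omega
  have hu2' : ∀ l, 2 ≤ 2 + 3 * (r (.u 0 l)).toNat + (r (.u 1 l)).toNat + (r (.u 2 l)).toNat :=
    fun l => by omega
  have hu2 := le_sum_fin hu2'
  rcases hr with hr | ⟨k, hk⟩
  · rcases gamma0_cases hr with ⟨hZ, hT, ha, -⟩ | ⟨hA, hB, hp, ha, -⟩ |
      ⟨hA, hz, hT, hy, ha, hC⟩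
    -- Extra cost at least `3n + m + 3`, against `n + 3m + 4` for `J*_α`; here `m < n` is needed.
    · have hz := sum_fin_eq (c := 3) (f := fun i => 3 * (r (.z i)).toNat) fun i => by simp [hZ i]
      have ht := sum_fin_eq (c := 2) (f := fun j => 1 + (r (.t j)).toNat) fun j => by simp [hT j]
      simp only [ha, Bool.toNat_true] at hd
      omega
    -- Since `ψ` fails, `r` departs from `α` somewhere, which brings the extra cost to `n + 3m + 5`.
    · have hne : ∃ i, r (.x i) ≠ α i := by
        by_contra! hcon
        have := hα fun j => r (.y j)
        rw [← funext hcon, hp] at this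
        cases this
      obtain ⟨i₀, hi₀⟩ := hne
      have hx := le_sum_fin_of_exists (fun i => two_le_pairCost (c := α i) (hA i)) i₀ (by
        have := hA i₀
        revert this hi₀
        cases α i₀ <;> cases r (.x i₀) <;> cases r (.x' i₀) <;> decide)
      have hy := le_sum_fin (c := 3)
        (f := fun j => 3 * (r (.y j)).toNat + 3 * (r (.y' j)).toNat) fun j => by
          have := hB j
          revert this
          cases r (.y j) <;> cases r (.y' j) <;> decide
      simp only [ha, Bool.toNat_true] at hd
      omega
    · have hx2 := fun i => two_le_pairCost (c := α i) (hA i)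
      have hx := le_sum_fin hx2
      have ht := sum_fin_eq (c := 2) (f := fun j => 1 + (r (.t j)).toNat) fun j => by simp [hT j]
      have hb := sum_fin_eq (c := 2) (f := fun j => 1 + (r (.b j)).toNat) fun j => by simp [hC j]
      -- All costs are at their lower bounds, hence so is each summand.
      have hx' := eq_of_sum_fin_le hx2 (by omega)
      have hu' := eq_of_sum_fin_le hu2' (by omega)
      have hxv : ∀ i, r (.x i) = α i ∧ r (.x' i) = !α i := fun i => by
        have h1 := hA i
        have h2 := hx' i
        revert h1 h2
        cases α i <;> cases r (.x i) <;> cases r (.x' i) <;> decide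
      have huv : ∀ k l, r (.u k l) = false := fun k l => by
        have h2 := hu' l
        have : ∀ b : Bool, b.toNat = 0 → b = false := by decide
        apply this
        fin_cases k <;> simp only [Fin.zero_eta, Fin.mk_one, Fin.reduceFinMk] <;> omega
      funext i
      cases i with
      | x i => exact (hxv i).1
      | x' i => exact (hxv i).2
      | z i => exact hz i
      | y j => exact (hy j).1
      | y' j => exact (hy j).2
      | t j => exact hT j
      | u k l => exact huv k l
      | a => exact ha
      | b j => exact hC j
  -- A fully accepted row of `u`-issues is far too expensive.
  · have hu := le_sum_fin (c := 3)
      (f := fun l => 2 + 3 * (r (.u 0 l)).toNat + (r (.u 1 l)).toNat + (r (.u 2 l)).toNat)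
      fun l => by
        have := hk l
        fin_cases k <;> simp only [Fin.zero_eta, Fin.mk_one, Fin.reduceFinMk] at this <;>
          simp only [this, Bool.toNat_true] <;> omega
    omega

/-! ### The original profile -/

/-- The ballot accepting exactly `a` and all `z`- and `t`-issues. It satisfies `Γ₀` whatever `ψ`
is, and bounds the Kemeny score of the original profile from above. -/
def Jzt : Issue n m → Bool := fun i => match i with
  | .z _ => true
  | .t _ => true
  | .a => true
  | _ => false

theorem rational_Jzt (hn : 0 < n) (hm : 0 < m)
    (psi : (Fin n → Bool) → (Fin m → Bool) → Bool) :
    rational psi (Jzt : Issue n m → Bool) := by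
  left
  have hA : ¬ bigA (Jzt : Issue n m → Bool) := fun h => by simpa [Jzt] using h ⟨0, hn⟩
  have hZ : bigZ (Jzt : Issue n m → Bool) := fun i => rfl
  have hB : ¬ bigB (Jzt : Issue n m → Bool) := fun h => by simpa [Jzt] using h ⟨0, hm⟩
  have hT : bigT (Jzt : Issue n m → Bool) := fun j => rfl
  have hC : ¬ bigC (Jzt : Issue n m → Bool) := fun h => by
    simpa [Jzt] using h ⟨0, by omega⟩
  simp only [gamma0, hA, hZ, hB, hT, hC]
  simp [Jzt, Xor']

theorem dist3_Jzt : dist3 (Jzt : Issue n m → Bool) (Jp 0) (Jp 1) (Jp 2)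
    = n * 3 + m * 3 + (10 * n + 10 * m + 10) * 3 + 3 := by
  rw [dist3_orig]
  simp [Jzt]

/-- Every Kemeny outcome of the original profile rejects all `b`-issues. -/
theorem kemenyMem_orig_b (hn : 0 < n) (hm : 0 < m)
    {psi : (Fin n → Bool) → (Fin m → Bool) → Bool} {r : Issue n m → Bool}
    (hr : kemenyMem psi (Jp 0) (Jp 1) (Jp 2) r) : ∀ j, r (.b j) = false := by
  obtain ⟨hr, hmin⟩ := hr
  have hd := hmin _ (rational_Jzt hn hm psi)
  rw [dist3_Jzt, dist3_orig] at hd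
  have hu3 := le_sum_fin (c := 3)
    (f := fun l => 3 + (r (.u 0 l)).toNat + (r (.u 1 l)).toNat + (r (.u 2 l)).toNat)
    fun l => by omega
  rcases hr with hr | ⟨k, hk⟩
  · rcases gamma0_cases hr with ⟨-, -, -, hb⟩ | ⟨-, -, -, -, hb⟩ | ⟨hA, -, hT, -, -, hC⟩
    · exact hb
    · exact hb
    · have hx := le_sum_fin (c := 3)
        (f := fun i => 3 * (r (.x i)).toNat + 3 * (r (.x' i)).toNat) fun i => by
          have := hA i
          revert this
          cases r (.x i) <;> cases r (.x' i) <;> decide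
      have ht := sum_fin_eq (c := 3) (f := fun j => 3 * (r (.t j)).toNat) fun j => by simp [hT j]
      have hb := sum_fin_eq (c := 3) (f := fun j => 3 * (r (.b j)).toNat) fun j => by simp [hC j]
      omega
  · have hu := le_sum_fin (c := 4)
      (f := fun l => 3 + (r (.u 0 l)).toNat + (r (.u 1 l)).toNat + (r (.u 2 l)).toNat)
      fun l => by
        have := hk l
        fin_cases k <;> simp only [Fin.zero_eta, Fin.mk_one, Fin.reduceFinMk] at this <;>
          simp only [this, Bool.toNat_true] <;> omega
    omega

end Brib

open Brib in
/-- assume m < n. If α is such that ψ[α∪β] is true for every β, then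
Kemeny((J*_α, J₂, J₃)) = {J*_α}; moreover d(J*_α, J₀, w) = 0, which is strictly
smaller than the weighted distance 2m+4 of every Kemeny outcome of J⃗ to J₀. -/
theorem brib_successful_bribe (n m : ℕ) (hn : 0 < n) (hm : 0 < m) (hmn : m < n)
    (psi : (Fin n → Bool) → (Fin m → Bool) → Bool)
    (α : Fin n → Bool) (hα : ∀ β : Fin m → Bool, psi α β = true) :
    (∀ r : Issue n m → Bool,
      kemenyMem psi (Jalpha α) (Jp 1) (Jp 2) r ↔ r = Jalpha α) ∧
    whamming wt (Jalpha α : Issue n m → Bool) Jzero = 0 ∧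
    (∀ r : Issue n m → Bool, kemenyMem psi (Jp 0) (Jp 1) (Jp 2) r →
      whamming wt r Jzero = 2 * m + 4 ∧
      whamming wt (Jalpha α : Issue n m → Bool) Jzero < whamming wt r Jzero) := by
  have h0 : whamming wt (Jalpha α : Issue n m → Bool) Jzero = 0 := by
    rw [whamming_Jzero]
    simp [Jalpha]
  refine ⟨fun r => ⟨fun h => ?_, ?_⟩, h0, fun r h => ?_⟩
  · exact eq_Jalpha_of_dist3_le hmn hα h.1 (h.2 _ (rational_Jalpha hn hm psi α))
  · rintro rfl
    refine ⟨rational_Jalpha hn hm psi α, fun r' hr' => ?_⟩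
    by_contra! hlt
    rw [eq_Jalpha_of_dist3_le hmn hα hr' hlt.le] at hlt
    exact lt_irrefl _ hlt
  · have hw : whamming wt r Jzero = 2 * m + 4 := by
      rw [whamming_Jzero]
      simp [kemenyMem_orig_b hn hm h]
    exact ⟨hw, by omega⟩
end
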